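/- The one-dimensional semi-discrete GLM-CGL scheme built from entropy conservative fluxes is entropy conservative: suppose for each i ∈ ℤ/Nℤ, U_i : I → ℝ¹⁰ is a differentiable curve of GLM-CGL states, for each interface f̃_{i+1/2}(t) ∈ ℝ¹⁰ satisfies the jump relation (V_{i+1} − V_i)·f̃_{i+1/2} = (𝓕_{x,i+1} − 𝓕_{x,i}) − (Φ_{i+1} − Φ_i)·(B_{x,i} + B_{x,i+1})/2, for each i the matrix N_i(t) ∈ ℝ^{10×10} satisfies V_iᵀ N_i = 0, and the semi-discrete scheme dU_i/dt + (f̃_{i+1/2} − f̃_{i−1/2})/Δx + Φ′(U_i)·(B_{x,i+1} − B_{x,i−1})/(2Δx) + N_i·(U_{i+1} − U_{i−1})/(2Δx) = 0 holds, where Φ′(U) = (0, B_x, B_y, B_z, 0, v·B, v_x, v_y, v_z, 0). Then for every i, d𝓔(U_i)/dt + (q̃_{i+1/2} − q̃_{i−1/2})/Δx = 0, where q̃_{i+1/2} = V̄_{i+1/2}·f̃_{i+1/2} + Φ̄_{i+1/2} B̄_{x,i+1/2} − 𝓕̄_{x,i+1/2} and bars denote interface arithmetic means of the corresponding quantities at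 U_i and U_{i+1}. -/

import Mathlib

noncomputable section

/-- A GLM-CGL state in primitive variables. -/
structure GLMState where
  ρ : ℝ
  vx : ℝ
  vy : ℝ
  vz : ℝ
  pl : ℝ
  pp : ℝ
  Bx : ℝ
  By : ℝ
  Bz : ℝ
  Ψ : ℝ

namespace GLMState

variable (S : GLMState)

/-- Average pressure `p = (2p⊥ + p∥)/3`. -/
def pavg : ℝ := (2 * S.pp + S.pl) / 3

/-- Total energy `E = ½(ρ|v|² + |B|² + 3p) + ½Ψ²`. -/
def Etot : ℝ :=
  (S.ρ * (S.vx ^ 2 + S.vy ^ 2 + S.vz ^ 2) + (S.Bx ^ 2 + S.By ^ 2 + S.Bz ^ 2)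
    + 3 * S.pavg) / 2 + S.Ψ ^ 2 / 2

/-- The conservative vector `U = (ρ, ρv, p∥, E, B, Ψ)`. -/
def consU : Fin 10 → ℝ :=
  ![S.ρ, S.ρ * S.vx, S.ρ * S.vy, S.ρ * S.vz, S.pl, S.Etot, S.Bx, S.By, S.Bz, S.Ψ]

/-- `s = ln(p∥ p⊥²/ρ⁵)`. -/
def sEnt : ℝ := Real.log (S.pl * S.pp ^ 2 / S.ρ ^ 5)

/-- The entropy `𝓔 = −ρ s`. -/
def entropy : ℝ := -S.ρ * S.sEnt

/-- The entropy variable vector `V`. -/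
def entVar : Fin 10 → ℝ :=
  ![5 - S.sEnt - (S.ρ / S.pp) * (S.vx ^ 2 + S.vy ^ 2 + S.vz ^ 2),
    2 * (S.ρ / S.pp) * S.vx, 2 * (S.ρ / S.pp) * S.vy, 2 * (S.ρ / S.pp) * S.vz,
    (S.ρ / S.pp) - (S.ρ / S.pl), -(2 * (S.ρ / S.pp)),
    2 * (S.ρ / S.pp) * S.Bx, 2 * (S.ρ / S.pp) * S.By, 2 * (S.ρ / S.pp) * S.Bz,
    2 * (S.ρ / S.pp) * S.Ψ]

/-- `Φ = 2ρ(v·B)/p⊥`. -/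
def Phi : ℝ := 2 * S.ρ * (S.vx * S.Bx + S.vy * S.By + S.vz * S.Bz) / S.pp

/-- The x-direction entropy potential `𝓕_x = 2ρv_x + β⊥v_x|B|² + 2c_hβ⊥ΨB_x`. -/
def potFx (ch : ℝ) : ℝ :=
  2 * S.ρ * S.vx + (S.ρ / S.pp) * S.vx * (S.Bx ^ 2 + S.By ^ 2 + S.Bz ^ 2)
    + 2 * ch * (S.ρ / S.pp) * S.Ψ * S.Bx

/-- `Φ′(U) = (0, B_x, B_y, B_z, 0, v·B, v_x, v_y, v_z, 0)`. -/
def phiPrime : Fin 10 → ℝ :=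
  ![0, S.Bx, S.By, S.Bz, 0, S.vx * S.Bx + S.vy * S.By + S.vz * S.Bz,
    S.vx, S.vy, S.vz, 0]

end GLMState

/-- The numerical entropy flux
`q̃_{i+1/2} = V̄·f̃_{i+1/2} + Φ̄ B̄_x − 𝓕̄_x` (interface arithmetic means). -/
def qtil (ch : ℝ) {N : ℕ} (U : ZMod N → ℝ → GLMState)
    (ftil : ZMod N → ℝ → Fin 10 → ℝ) (i : ZMod N) (t : ℝ) : ℝ :=
  (∑ k : Fin 10, (((U i t).entVar k + (U (i + 1) t).entVar k) / 2) * ftil i t k)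
    + (((U i t).Phi + (U (i + 1) t).Phi) / 2) * (((U i t).Bx + (U (i + 1) t).Bx) / 2)
    - (((U i t).potFx ch + (U (i + 1) t).potFx ch) / 2)

/-!
Contracting the scheme at cell `i` with the entropy variables `V` removes the `N`-term and, by
`V · Φ′ = Φ` and the chain rule, leaves `d𝓔/dt`, the flux difference `V · (f̃₊ - f̃₋)` and
`Φ (B̄₊ - B̄₋)`. The jump relation says precisely that `V · f̃ + Φ B̄ - 𝓕` takes the same value on
the two sides of an interface. That common value is the entropy flux `q̃`, so evaluating both
interfaces of cell `i` from inside the cell turns these terms into `q̃₊ - q̃₋`.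
-/

open scoped Matrix

theorem hasDerivAt_mul_sq_of_hasDerivAt_mul {𝕜 : Type*} [NontriviallyNormedField 𝕜]
    {ρ v : 𝕜 → 𝕜} {ρ' m' t : 𝕜} (hρ : HasDerivAt ρ ρ' t)
    (hm : HasDerivAt (fun τ => ρ τ * v τ) m' t) (hρ0 : ρ t ≠ 0) :
    HasDerivAt (fun τ => ρ τ * v τ ^ 2) (2 * v t * m' - v t ^ 2 * ρ') t := by
  -- `v` itself is never differentiated; with `x / 0 = 0` the formula also holds where `ρ` vanishes.
  have hquot : (fun τ => ρ τ * v τ ^ 2) = fun τ => (ρ τ * v τ) ^ 2 / ρ τ := by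
    funext τ
    by_cases h : ρ τ = 0
    · simp [h]
    · field_simp
  rw [hquot]
  refine ((hm.fun_pow 2).fun_div hρ hρ0).congr_deriv ?_
  push_cast
  field_simp

namespace GLMState

section ChainRule

variable {u : ℝ → GLMState} {t : ℝ}

theorem hasDerivAt_pp {U' : Fin 10 → ℝ} (hρ0 : (u t).ρ ≠ 0)
    (hU : HasDerivAt (fun τ => (u τ).consU) U' t) :
    HasDerivAt (fun τ => (u τ).pp)
      (U' 5 - ((u t).vx * U' 1 + (u t).vy * U' 2 + (u t).vz * U' 3)
        + ((u t).vx ^ 2 + (u t).vy ^ 2 + (u t).vz ^ 2) / 2 * U' 0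
        - ((u t).Bx * U' 6 + (u t).By * U' 7 + (u t).Bz * U' 8)
        - U' 4 / 2 - (u t).Ψ * U' 9) t := by
  have hcomp := hasDerivAt_pi.mp hU
  have hρ : HasDerivAt (fun τ => (u τ).ρ) (U' 0) t := hcomp 0
  have hkin_x : HasDerivAt (fun τ => (u τ).ρ * (u τ).vx ^ 2) _ t :=
    hasDerivAt_mul_sq_of_hasDerivAt_mul hρ (hcomp 1) hρ0
  have hkin_y : HasDerivAt (fun τ => (u τ).ρ * (u τ).vy ^ 2) _ t :=
    hasDerivAt_mul_sq_of_hasDerivAt_mul hρ (hcomp 2) hρ0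
  have hkin_z : HasDerivAt (fun τ => (u τ).ρ * (u τ).vz ^ 2) _ t :=
    hasDerivAt_mul_sq_of_hasDerivAt_mul hρ (hcomp 3) hρ0
  have hpl : HasDerivAt (fun τ => (u τ).pl) (U' 4) t := hcomp 4
  have hE : HasDerivAt (fun τ => (u τ).Etot) (U' 5) t := hcomp 5
  have hBx : HasDerivAt (fun τ => (u τ).Bx) (U' 6) t := hcomp 6
  have hBy : HasDerivAt (fun τ => (u τ).By) (U' 7) t := hcomp 7
  have hBz : HasDerivAt (fun τ => (u τ).Bz) (U' 8) t := hcomp 8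
  have hΨ : HasDerivAt (fun τ => (u τ).Ψ) (U' 9) t := hcomp 9
  have hpp_eq : (fun τ => (u τ).pp) = fun τ => (u τ).Etot
      - ((u τ).ρ * (u τ).vx ^ 2 + (u τ).ρ * (u τ).vy ^ 2 + (u τ).ρ * (u τ).vz ^ 2
        + ((u τ).Bx ^ 2 + (u τ).By ^ 2 + (u τ).Bz ^ 2) + (u τ).pl + (u τ).Ψ ^ 2) / 2 := by
    funext τ
    simp only [Etot, pavg]
    ring
  rw [hpp_eq]
  refine (hE.fun_sub ((((((hkin_x.fun_add hkin_y).fun_add hkin_z).fun_add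
    (((hBx.fun_pow 2).fun_add (hBy.fun_pow 2)).fun_add (hBz.fun_pow 2))).fun_add
    hpl).fun_add (hΨ.fun_pow 2)).div_const 2)).congr_deriv ?_
  push_cast
  ring

theorem hasDerivAt_entropy_of_thermodynamic {ρ' pl' pp' : ℝ}
    (hρ0 : (u t).ρ ≠ 0) (hpl0 : (u t).pl ≠ 0) (hpp0 : (u t).pp ≠ 0)
    (hρ : HasDerivAt (fun τ => (u τ).ρ) ρ' t) (hpl : HasDerivAt (fun τ => (u τ).pl) pl' t)
    (hpp : HasDerivAt (fun τ => (u τ).pp) pp' t) :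
    HasDerivAt (fun τ => (u τ).entropy)
      ((5 - (u t).sEnt) * ρ' - (u t).ρ / (u t).pl * pl' - 2 * ((u t).ρ / (u t).pp) * pp') t := by
  have hs : HasDerivAt (fun τ => (u τ).sEnt)
      (pl' / (u t).pl + 2 * pp' / (u t).pp - 5 * ρ' / (u t).ρ) t := by
    refine (((hpl.fun_mul (hpp.fun_pow 2)).fun_div (hρ.fun_pow 5) (pow_ne_zero 5 hρ0)).log
      (div_ne_zero (mul_ne_zero hpl0 (pow_ne_zero 2 hpp0)) (pow_ne_zero 5 hρ0))).congr_deriv ?_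
    push_cast
    field_simp
  refine (hρ.fun_neg.fun_mul hs).congr_deriv ?_
  field_simp
  ring

theorem hasDerivAt_entropy {U' : Fin 10 → ℝ}
    (hρ0 : (u t).ρ ≠ 0) (hpl0 : (u t).pl ≠ 0) (hpp0 : (u t).pp ≠ 0)
    (hU : HasDerivAt (fun τ => (u τ).consU) U' t) :
    HasDerivAt (fun τ => (u τ).entropy) ((u t).entVar ⬝ᵥ U') t := by
  have hcomp := hasDerivAt_pi.mp hU
  refine (hasDerivAt_entropy_of_thermodynamic hρ0 hpl0 hpp0 (hcomp 0) (hcomp 4)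
    (hasDerivAt_pp hρ0 hU)).congr_deriv ?_
  simp only [dotProduct, entVar, Fin.sum_univ_succ, Fin.sum_univ_zero, Fin.isValue,
    Fin.succ_zero_eq_one, Fin.succ_one_eq_two, Fin.reduceSucc, Matrix.cons_val_zero,
    Matrix.cons_val_succ]
  ring

end ChainRule

theorem entVar_dotProduct_phiPrime (S : GLMState) : S.entVar ⬝ᵥ S.phiPrime = S.Phi := by
  simp only [dotProduct, entVar, phiPrime, Phi, Fin.sum_univ_succ, Fin.sum_univ_zero,
    Matrix.cons_val_zero, Matrix.cons_val_succ]
  ring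

/-- The jump relation making `f` an entropy conservative numerical flux at an interface with left
state `L` and right state `R`. -/
def IsEntropyConservativeFlux (ch : ℝ) (L R : GLMState) (f : Fin 10 → ℝ) : Prop :=
  (R.entVar - L.entVar) ⬝ᵥ f
    = (R.potFx ch - L.potFx ch) - (R.Phi - L.Phi) * ((L.Bx + R.Bx) / 2)

/-- The numerical entropy flux `q̃` at an interface with left state `L` and right state `R`; it
is the two-state form of `qtil`, which is tied to a periodic grid. -/
def entropyFlux (ch : ℝ) (L R : GLMState) (f : Fin 10 → ℝ) : ℝ :=
  (∑ k, (L.entVar k + R.entVar k) / 2 * f k)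
    + (L.Phi + R.Phi) / 2 * ((L.Bx + R.Bx) / 2) - (L.potFx ch + R.potFx ch) / 2

theorem qtil_sub_one (ch : ℝ) {N : ℕ} (U : ZMod N → ℝ → GLMState)
    (ftil : ZMod N → ℝ → Fin 10 → ℝ) (i : ZMod N) (t : ℝ) :
    qtil ch U ftil (i - 1) t = entropyFlux ch (U (i - 1) t) (U i t) (ftil (i - 1) t) := by
  rw [qtil, sub_add_cancel, entropyFlux]

section EntropyFlux

variable {ch : ℝ} {L C R : GLMState} {f fL fR : Fin 10 → ℝ}

theorem entropyFlux_eq_dotProduct :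
    entropyFlux ch L R f = (L.entVar ⬝ᵥ f + R.entVar ⬝ᵥ f) / 2
      + (L.Phi + R.Phi) / 2 * ((L.Bx + R.Bx) / 2) - (L.potFx ch + R.potFx ch) / 2 := by
  simp only [entropyFlux, dotProduct, ← Finset.sum_add_distrib, Finset.sum_div, ← add_mul,
    div_mul_eq_mul_div]

theorem IsEntropyConservativeFlux.entropyFlux_eq_left (hf : IsEntropyConservativeFlux ch L R f) :
    entropyFlux ch L R f = L.entVar ⬝ᵥ f + L.Phi * ((L.Bx + R.Bx) / 2) - L.potFx ch := by
  rw [IsEntropyConservativeFlux, sub_dotProduct] at hf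
  rw [entropyFlux_eq_dotProduct]
  linarith

theorem IsEntropyConservativeFlux.entropyFlux_eq_right (hf : IsEntropyConservativeFlux ch L R f) :
    entropyFlux ch L R f = R.entVar ⬝ᵥ f + R.Phi * ((L.Bx + R.Bx) / 2) - R.potFx ch := by
  rw [IsEntropyConservativeFlux, sub_dotProduct] at hf
  rw [entropyFlux_eq_dotProduct]
  linarith

theorem entropyFlux_sub_entropyFlux (hL : IsEntropyConservativeFlux ch L C fL)
    (hR : IsEntropyConservativeFlux ch C R fR) :
    entropyFlux ch C R fR - entropyFlux ch L C fL
      = C.entVar ⬝ᵥ (fR - fL) + C.Phi * ((R.Bx - L.Bx) / 2) := by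
  rw [hR.entropyFlux_eq_left, hL.entropyFlux_eq_right, dotProduct_sub]
  ring

end EntropyFlux

end GLMState

open GLMState

theorem semi_discrete_glm_cgl_entropy_conservative_general
    {ch Δx t : ℝ} (hΔx : Δx ≠ 0) {u : ℝ → GLMState} {L R : GLMState}
    (hρ : 0 < (u t).ρ) (hpl : 0 < (u t).pl) (hpp : 0 < (u t).pp)
    {U' : Fin 10 → ℝ} (hU : HasDerivAt (fun τ => (u τ).consU) U' t)
    {fL fR : Fin 10 → ℝ} (hL : IsEntropyConservativeFlux ch L (u t) fL)
    (hR : IsEntropyConservativeFlux ch (u t) R fR)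
    {A : Matrix (Fin 10) (Fin 10) ℝ} (hA : (u t).entVar ᵥ* A = 0)
    (hscheme : ∀ k, U' k + (fR k - fL k) / Δx
      + (u t).phiPrime k * ((R.Bx - L.Bx) / (2 * Δx))
      + (A *ᵥ (R.consU - L.consU)) k / (2 * Δx) = 0) :
    HasDerivAt (fun τ => (u τ).entropy)
      (-((entropyFlux ch (u t) R fR - entropyFlux ch L (u t) fL) / Δx)) t := by
  have hbalance : Δx • U' + (fR - fL) + ((R.Bx - L.Bx) / 2) • (u t).phiPrime
      + (1 / 2 : ℝ) • A *ᵥ (R.consU - L.consU) = 0 := by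
    funext k
    have hk := hscheme k
    field_simp at hk
    simp only [Pi.add_apply, Pi.sub_apply, Pi.smul_apply, Pi.zero_apply, smul_eq_mul]
    linarith
  have hcontract := congrArg ((u t).entVar ⬝ᵥ ·) hbalance
  simp only [dotProduct_add, dotProduct_smul, dotProduct_zero, smul_eq_mul,
    entVar_dotProduct_phiPrime, Matrix.dotProduct_mulVec, hA, zero_dotProduct] at hcontract
  refine (hasDerivAt_entropy hρ.ne' hpl.ne' hpp.ne' hU).congr_deriv ?_
  rw [entropyFlux_sub_entropyFlux hL hR, ← neg_div, eq_div_iff hΔx]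
  linarith

/-- the one-dimensional semi-discrete GLM-CGL scheme built from entropy
conservative fluxes and non-conservative terms annihilated by the entropy variables is
entropy conservative: `d𝓔(U_i)/dt + (q̃_{i+1/2} − q̃_{i−1/2})/Δx = 0`. -/
theorem semi_discrete_glm_cgl_entropy_conservative
    (ch : ℝ) (N : ℕ) (hN : 1 ≤ N) (Δx : ℝ) (hΔx : 0 < Δx)
    (I : Set ℝ) (hI : IsOpen I)
    (U : ZMod N → ℝ → GLMState)
    (hpos : ∀ i : ZMod N, ∀ t ∈ I, 0 < (U i t).ρ ∧ 0 < (U i t).pl ∧ 0 < (U i t).pp)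
    (hdiff : ∀ i : ZMod N, ∀ k : Fin 10, ∀ t ∈ I,
      DifferentiableAt ℝ (fun τ => (U i τ).consU k) t)
    (ftil : ZMod N → ℝ → Fin 10 → ℝ)
    (hjump : ∀ i : ZMod N, ∀ t ∈ I,
      (∑ k : Fin 10, ((U (i + 1) t).entVar k - (U i t).entVar k) * ftil i t k)
        = ((U (i + 1) t).potFx ch - (U i t).potFx ch)
          - ((U (i + 1) t).Phi - (U i t).Phi) * (((U i t).Bx + (U (i + 1) t).Bx) / 2))
    (Nmat : ZMod N → ℝ → Matrix (Fin 10) (Fin 10) ℝ)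
    (hNmat : ∀ i : ZMod N, ∀ t ∈ I, ∀ m : Fin 10,
      (∑ k : Fin 10, (U i t).entVar k * Nmat i t k m) = 0)
    (hscheme : ∀ i : ZMod N, ∀ t ∈ I, ∀ k : Fin 10,
      deriv (fun τ => (U i τ).consU k) t
        + (ftil i t k - ftil (i - 1) t k) / Δx
        + (U i t).phiPrime k * (((U (i + 1) t).Bx - (U (i - 1) t).Bx) / (2 * Δx))
        + (∑ m : Fin 10,
            Nmat i t k m * ((U (i + 1) t).consU m - (U (i - 1) t).consU m)) / (2 * Δx)
        = 0) :
    ∀ i : ZMod N, ∀ t ∈ I,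
      deriv (fun τ => (U i τ).entropy) t
        + (qtil ch U ftil i t - qtil ch U ftil (i - 1) t) / Δx = 0 := by
  intro i t ht
  obtain ⟨hρ, hpl, hpp⟩ := hpos i t ht
  have hU := hasDerivAt_pi.mpr fun k => (hdiff i k t ht).hasDerivAt
  have hleft : IsEntropyConservativeFlux ch (U (i - 1) t) (U i t) (ftil (i - 1) t) := by
    have h := hjump (i - 1) t ht
    rwa [sub_add_cancel] at h
  have hbalance := semi_discrete_glm_cgl_entropy_conservative_general hΔx.ne' hρ hpl hpp hU hleft
    (hjump i t ht) (funext (hNmat i t ht)) (hscheme i t ht)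
  rw [qtil_sub_one]
  exact eq_neg_iff_add_eq_zero.mp hbalance.deriv

end
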